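/- Null-criticality with potential term: let c_p := (p/(p−1))^{p−1}, let V : Ω → ℝ lie in M^q_loc(p;Ω), assume Q_{p,A,c_pV} is subcritical in Ω, let φ ∈ C_c^∞(Ω) be nonnegative and not identically 0, and let G ∈ C^{1,α}(Ω) (α ∈ (0,1]) be a positive weak solution of Q_{p,A,c_pV}(u) = φ in Ω satisfying: G → 0 at infinity in Ω, ∫_Ω V G^{p−1} dx < 0, and ∫_Ω |V| G^{p−1} dx < ∞. Set W := ((p−1)/p)^p (|∇G|_A / G)^p + ((p−1)/p)^{p−1} φ G^{1−p} and v := G^{(p−1)/p}. Then ∫_Ω W v^p dx = ∫_Ω W G^{p−1} dx = ∞. -/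

import Mathlib

/-!
On `Ω` one has `W G^{p-1} ≥ ((p-1)/p)^p |∇G|_A^p / G`, so it suffices that `|∇G|_A^p / G` is not
integrable. Suppose it is. Let `h` be smooth with `h = 0` on `(-∞, 1]` and `h = 1` on `[2, ∞)`.
Since `G → 0` at infinity, `h(G/ε)` has compact support in `Ω`, and it is `C¹`; testing the
equation with it gives

`∫ |∇G|_A^p h'(G/ε)/ε + c_p ∫ V G^{p-1} h(G/ε) = ∫ φ h(G/ε)`.

As `t ↦ t h'(t)` is bounded on `[0, ∞)`, the first integrand is dominated by a multiple of
`|∇G|_A^p / G`, and it vanishes where `G > 2ε`; dominated convergence as `ε → 0` yields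
`c_p ∫ V G^{p-1} = ∫ φ` (`integral_potential_eq_of_integrable`). The left side is negative and the
right side is nonnegative, a contradiction.

The weak formulation only allows smooth test functions; `weak_formulation_C1` extends it to `C¹`
ones by mollification (`exists_smooth_approx`), using that the flux `|∇G|_A^{p-2} A∇G` is locally
bounded and that `V G^{p-1}` is integrable.
-/

open MeasureTheory Set Filter Topology

noncomputable section

variable {n : ℕ}

/-- The `A`-inner product `⟨A(x)ξ, η⟩`. -/
def aInner (A : EuclideanSpace ℝ (Fin n) → Matrix (Fin n) (Fin n) ℝ)
    (x ξ η : EuclideanSpace ℝ (Fin n)) : ℝ :=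
  ∑ i, ∑ j, A x i j * ξ j * η i

/-- `|ξ|_A := ⟨A(x)ξ, ξ⟩^{1/2}`. -/
def aNorm (A : EuclideanSpace ℝ (Fin n) → Matrix (Fin n) (Fin n) ℝ)
    (x ξ : EuclideanSpace ℝ (Fin n)) : ℝ :=
  Real.sqrt (aInner A x ξ ξ)

/-- Assumptions on the matrix field `A`: symmetric, positive definite, locally Hölder
continuous, and locally uniformly elliptic on `Ω`. -/
structure IsEllipticMatrix (Ω : Set (EuclideanSpace ℝ (Fin n)))
    (A : EuclideanSpace ℝ (Fin n) → Matrix (Fin n) (Fin n) ℝ) : Prop where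
  symm : ∀ x ∈ Ω, (A x).IsSymm
  posdef : ∀ x ∈ Ω, ∀ ξ : EuclideanSpace ℝ (Fin n), ξ ≠ 0 → 0 < aInner A x ξ ξ
  locHolder : ∀ K ⊆ Ω, IsCompact K → ∃ C > (0:ℝ), ∃ α ∈ Set.Ioc (0:ℝ) 1,
      ∀ x ∈ K, ∀ y ∈ K, ∀ i j, |A x i j - A y i j| ≤ C * dist x y ^ α
  elliptic : ∀ K ⊆ Ω, IsCompact K → ∃ Θ > (0:ℝ), ∀ x ∈ K, ∀ ξ : EuclideanSpace ℝ (Fin n),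
      Θ⁻¹ * ‖ξ‖ ^ 2 ≤ aInner A x ξ ξ ∧ aInner A x ξ ξ ≤ Θ * ‖ξ‖ ^ 2

/-- Test functions: `C_c^∞` functions with support in `U`. -/
def IsTestFun (U : Set (EuclideanSpace ℝ (Fin n))) (ψ : EuclideanSpace ℝ (Fin n) → ℝ) : Prop :=
  ContDiff ℝ (⊤ : ℕ∞) ψ ∧ HasCompactSupport ψ ∧ tsupport ψ ⊆ U

/-- Weakly `(p,A)`-harmonic in `U`. -/
def IsPAHarmonic (A : EuclideanSpace ℝ (Fin n) → Matrix (Fin n) (Fin n) ℝ) (p : ℝ)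
    (U : Set (EuclideanSpace ℝ (Fin n))) (G : EuclideanSpace ℝ (Fin n) → ℝ) : Prop :=
  ∀ ψ, IsTestFun U ψ →
    ∫ x in U, (aNorm A x (gradient G x)) ^ (p - 2) *
      aInner A x (gradient G x) (gradient ψ x) = 0

/-- Weak solution of `Q_{p,A,V}(u) = g` in `U` (for positive `u`). -/
def IsWeakSolution (A : EuclideanSpace ℝ (Fin n) → Matrix (Fin n) (Fin n) ℝ) (p : ℝ)
    (V g : EuclideanSpace ℝ (Fin n) → ℝ) (U : Set (EuclideanSpace ℝ (Fin n)))
    (u : EuclideanSpace ℝ (Fin n) → ℝ) : Prop :=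
  ∀ ψ, IsTestFun U ψ →
    (∫ x in U, (aNorm A x (gradient u x)) ^ (p - 2) *
        aInner A x (gradient u x) (gradient ψ x))
      + (∫ x in U, V x * u x ^ (p - 1) * ψ x)
      = ∫ x in U, g x * ψ x

/-- Weak supersolution of `Q_{p,A,V}(u) = 0` in `U` (for positive `u`). -/
def IsWeakSupersolution (A : EuclideanSpace ℝ (Fin n) → Matrix (Fin n) (Fin n) ℝ) (p : ℝ)
    (V : EuclideanSpace ℝ (Fin n) → ℝ) (U : Set (EuclideanSpace ℝ (Fin n)))
    (u : EuclideanSpace ℝ (Fin n) → ℝ) : Prop :=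
  ∀ ψ, IsTestFun U ψ → (∀ x, 0 ≤ ψ x) →
    0 ≤ (∫ x in U, (aNorm A x (gradient u x)) ^ (p - 2) *
        aInner A x (gradient u x) (gradient ψ x))
      + (∫ x in U, V x * u x ^ (p - 1) * ψ x)

/-- `Q_{p,A,V}` is subcritical in `Ω`. -/
def IsSubcritical (A : EuclideanSpace ℝ (Fin n) → Matrix (Fin n) (Fin n) ℝ) (p : ℝ)
    (V : EuclideanSpace ℝ (Fin n) → ℝ) (Ω : Set (EuclideanSpace ℝ (Fin n))) : Prop :=
  ∃ W₀ : EuclideanSpace ℝ (Fin n) → ℝ, ContinuousOn W₀ Ω ∧ (∀ x ∈ Ω, 0 ≤ W₀ x) ∧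
    (∃ x ∈ Ω, W₀ x ≠ 0) ∧
    ∀ ψ, IsTestFun Ω ψ →
      0 ≤ ∫ x in Ω, ((aNorm A x (gradient ψ x)) ^ p + (V x - W₀ x) * |ψ x| ^ p)

/-- A null-sequence for `Q_{p,A,V}` in `U`. -/
def IsNullSequence (A : EuclideanSpace ℝ (Fin n) → Matrix (Fin n) (Fin n) ℝ) (p : ℝ)
    (V : EuclideanSpace ℝ (Fin n) → ℝ) (U : Set (EuclideanSpace ℝ (Fin n)))
    (u : ℕ → EuclideanSpace ℝ (Fin n) → ℝ) : Prop :=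
  (∀ k, IsTestFun U (u k)) ∧ (∀ k x, 0 ≤ u k x) ∧
  (∃ B : Set (EuclideanSpace ℝ (Fin n)), IsOpen B ∧ B.Nonempty ∧
      IsCompact (closure B) ∧ closure B ⊆ U ∧
      ∃ c > (0:ℝ), ∀ k, c ≤ (∫ x in B, u k x ^ p) ∧ (∫ x in B, u k x ^ p) ≤ c⁻¹) ∧
  Tendsto (fun k => ∫ x in U,
      ((aNorm A x (gradient (u k) x)) ^ p + V x * |u k x| ^ p)) atTop (𝓝 0)

/-- `V` lies in the local Morrey space `M^q_loc(p;Ω)`. -/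
def InMorreyLoc (p : ℝ) (Ω : Set (EuclideanSpace ℝ (Fin n)))
    (V : EuclideanSpace ℝ (Fin n) → ℝ) : Prop :=
  if p < n then
    ∃ q : ℝ, q > (n : ℝ) / p ∧ ∀ ω : Set (EuclideanSpace ℝ (Fin n)),
      IsOpen ω → IsCompact (closure ω) → closure ω ⊆ Ω →
      ∃ M : ℝ, ∀ y ∈ ω, ∀ r ∈ Set.Ioo (0:ℝ) (Metric.diam ω),
        r ^ ((n : ℝ) / q - n) * (∫ x in ω ∩ Metric.ball y r, |V x|) ≤ M
  else if (n : ℝ) < p then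
    MeasureTheory.LocallyIntegrableOn V Ω
  else
    ∃ q : ℝ, q > (n : ℝ) ∧ ∀ ω : Set (EuclideanSpace ℝ (Fin n)),
      IsOpen ω → IsCompact (closure ω) → closure ω ⊆ Ω →
      ∃ M : ℝ, ∀ y ∈ ω, ∀ r ∈ Set.Ioo (0:ℝ) (Metric.diam ω),
        (Real.log (Metric.diam ω / r)) ^ (q * ((n : ℝ) - 1) / n) *
          (∫ x in ω ∩ Metric.ball y r, |V x|) ≤ M

/-- `G ∈ C^{1,α}(U)`: continuously differentiable with locally `α`-Hölder gradient. -/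
def IsC1Holder (α : ℝ) (U : Set (EuclideanSpace ℝ (Fin n)))
    (G : EuclideanSpace ℝ (Fin n) → ℝ) : Prop :=
  ContDiffOn ℝ 1 G U ∧ ∀ K ⊆ U, IsCompact K → ∃ C : ℝ,
    ∀ x ∈ K, ∀ y ∈ K, ‖gradient G x - gradient G y‖ ≤ C * dist x y ^ α

/-- `G → 0` at infinity in `Ω` (where `G` is considered on `U ⊆ Ω`). -/
def TendstoZeroAtInfinityIn (Ω U : Set (EuclideanSpace ℝ (Fin n)))
    (G : EuclideanSpace ℝ (Fin n) → ℝ) : Prop :=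
  ∀ ε > (0:ℝ), ∃ K ⊆ Ω, IsCompact K ∧ ∀ x ∈ U \ K, G x < ε

open scoped Classical in
/-- Flux integral `∫_S |∇G|_A^p / |∇G| dH^{n-1}`, with integrand `0` where `∇G = 0`. -/
def fluxIntegral (A : EuclideanSpace ℝ (Fin n) → Matrix (Fin n) (Fin n) ℝ) (p : ℝ)
    (G : EuclideanSpace ℝ (Fin n) → ℝ) (S : Set (EuclideanSpace ℝ (Fin n))) : ℝ :=
  ∫ x in S, (if gradient G x = 0 then 0
    else (aNorm A x (gradient G x)) ^ p / ‖gradient G x‖) ∂(μH[(n : ℝ) - 1])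

end

/-! ### Approximation of `C¹` functions by smooth ones -/

/-- Mollification: a compactly supported `C¹` function is approximated by smooth functions,
uniformly together with its gradient and with supports shrinking to its own. -/
lemma exists_smooth_approx {n : ℕ} {ψ : EuclideanSpace ℝ (Fin n) → ℝ}
    (hψ : ContDiff ℝ 1 ψ) (hc : HasCompactSupport ψ) {δ : ℝ} (hδ : 0 < δ) :
    ∃ χ : EuclideanSpace ℝ (Fin n) → ℝ, ContDiff ℝ (⊤ : ℕ∞) χ ∧
      Function.support χ ⊆ Metric.cthickening δ (tsupport ψ) ∧
      (∀ x, |χ x - ψ x| ≤ δ) ∧ ∀ x, ‖gradient χ x - gradient ψ x‖ ≤ δ := by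
  have hcd : Continuous (fderiv ℝ ψ) := hψ.continuous_fderiv one_ne_zero
  have hu := hc.uniformContinuous_of_continuous hψ.continuous
  have hud := (hc.fderiv (𝕜 := ℝ)).uniformContinuous_of_continuous hcd
  obtain ⟨r₁, hr₁, h₁⟩ := Metric.uniformContinuous_iff.1 hu δ hδ
  obtain ⟨r₂, hr₂, h₂⟩ := Metric.uniformContinuous_iff.1 hud δ hδ
  set r := min δ (min r₁ r₂) with hr
  have hr0 : 0 < r := lt_min hδ (lt_min hr₁ hr₂)
  let b : ContDiffBump (0 : EuclideanSpace ℝ (Fin n)) := ⟨r / 2, r, by linarith, by linarith⟩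
  have hbr : b.rOut = r := rfl
  refine ⟨MeasureTheory.convolution (b.normed volume) ψ (ContinuousLinearMap.lsmul ℝ ℝ) volume,
    ?_, ?_, ?_, ?_⟩
  · exact HasCompactSupport.contDiff_convolution_left _ b.hasCompactSupport_normed
      b.contDiff_normed hψ.continuous.locallyIntegrable
  · intro x hx
    obtain ⟨y, hy, z, hz, rfl⟩ :=
      Set.mem_add.1 (MeasureTheory.support_convolution_subset _ hx)
    rw [b.support_normed_eq, hbr] at hy
    refine Metric.mem_cthickening_of_dist_le _ z _ _ (subset_tsupport _ hz) ?_
    have : ‖y‖ < r := by simpa using hy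
    have h3 : dist (y + z) z = ‖y‖ := by simp [dist_eq_norm]
    rw [h3]
    exact this.le.trans (min_le_left _ _)
  · intro x
    rw [← Real.dist_eq]
    refine ContDiffBump.dist_normed_convolution_le hψ.continuous.aestronglyMeasurable ?_
    intro y hy
    refine (h₁ (lt_of_lt_of_le (Metric.mem_ball.1 hy) ?_)).le
    exact (min_le_right _ _).trans (min_le_left _ _)
  · intro x
    have hF := HasCompactSupport.hasFDerivAt_convolution_right (𝕜 := ℝ) (μ := volume)
      (ContinuousLinearMap.lsmul ℝ ℝ) hc
      (b.continuous_normed (μ := volume)).locallyIntegrable hψ x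
    have hL : ContinuousLinearMap.precompR (EuclideanSpace ℝ (Fin n))
        (ContinuousLinearMap.lsmul ℝ ℝ : ℝ →L[ℝ] ℝ →L[ℝ] ℝ)
        = (ContinuousLinearMap.lsmul ℝ ℝ :
          ℝ →L[ℝ] (EuclideanSpace ℝ (Fin n) →L[ℝ] ℝ) →L[ℝ] _) := by
      ext c f
      simp
    rw [hL] at hF
    unfold gradient
    rw [hF.fderiv, ← map_sub, LinearIsometryEquiv.norm_map, ← dist_eq_norm]
    refine ContDiffBump.dist_normed_convolution_le hcd.aestronglyMeasurable ?_
    intro y hy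
    refine (h₂ (lt_of_lt_of_le (Metric.mem_ball.1 hy) ?_)).le
    exact (min_le_right _ _).trans (min_le_right _ _)

/-! ### Regularity and local bounds for the flux -/

lemma IsEllipticMatrix.continuousOn_entry {n : ℕ} {Ω : Set (EuclideanSpace ℝ (Fin n))}
    (hΩ : IsOpen Ω) {A : EuclideanSpace ℝ (Fin n) → Matrix (Fin n) (Fin n) ℝ}
    (hA : IsEllipticMatrix Ω A) (i j : Fin n) : ContinuousOn (fun x => A x i j) Ω := by
  intro x hx
  refine ContinuousAt.continuousWithinAt ?_
  obtain ⟨r, hr, hrs⟩ := Metric.nhds_basis_closedBall.mem_iff.1 (hΩ.mem_nhds hx)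
  obtain ⟨C, hC, α, hα, h⟩ := hA.locHolder _ hrs (isCompact_closedBall x r)
  have hlim : Tendsto (fun y => C * dist y x ^ α) (𝓝 x) (𝓝 0) := by
    have h1 : Tendsto (fun y => dist y x) (𝓝 x) (𝓝 0) := by
      simpa using (continuous_id.dist (continuous_const (y := x))).tendsto x
    have h2 := (h1.rpow_const (p := α) (Or.inr hα.1.le)).const_mul C
    simpa [Real.zero_rpow hα.1.ne'] using h2
  refine tendsto_iff_dist_tendsto_zero.2 (squeeze_zero' (Eventually.of_forall fun _ => dist_nonneg)
    ?_ hlim)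
  filter_upwards [Metric.closedBall_mem_nhds x hr] with y hy
  rw [Real.dist_eq]
  exact h y hy x (Metric.mem_closedBall_self hr.le) i j

lemma continuousOn_gradient {n : ℕ} {Ω : Set (EuclideanSpace ℝ (Fin n))}
    (hΩ : IsOpen Ω) {G : EuclideanSpace ℝ (Fin n) → ℝ} (hG : ContDiffOn ℝ 1 G Ω) :
    ContinuousOn (gradient G) Ω :=
  (LinearIsometryEquiv.continuous _).comp_continuousOn
    (hG.continuousOn_fderiv_of_isOpen hΩ le_rfl)

lemma continuousOn_aInner {n : ℕ} {Ω : Set (EuclideanSpace ℝ (Fin n))}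
    (hΩ : IsOpen Ω) {A : EuclideanSpace ℝ (Fin n) → Matrix (Fin n) (Fin n) ℝ}
    (hA : IsEllipticMatrix Ω A) {X Y : EuclideanSpace ℝ (Fin n) → EuclideanSpace ℝ (Fin n)}
    (hX : ContinuousOn X Ω) (hY : ContinuousOn Y Ω) :
    ContinuousOn (fun x => aInner A x (X x) (Y x)) Ω := by
  unfold aInner
  refine continuousOn_finsetSum _ fun i _ => continuousOn_finsetSum _ fun j _ => ?_
  exact ((hA.continuousOn_entry hΩ i j).mul
    ((EuclideanSpace.proj (𝕜 := ℝ) j).continuous.comp_continuousOn hX)).mul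
    ((EuclideanSpace.proj (𝕜 := ℝ) i).continuous.comp_continuousOn hY)

lemma aNorm_nonneg {n : ℕ} (A : EuclideanSpace ℝ (Fin n) → Matrix (Fin n) (Fin n) ℝ)
    (x ξ : EuclideanSpace ℝ (Fin n)) : 0 ≤ aNorm A x ξ := Real.sqrt_nonneg _

lemma aInner_smul_right {n : ℕ} (A : EuclideanSpace ℝ (Fin n) → Matrix (Fin n) (Fin n) ℝ)
    (x ξ η : EuclideanSpace ℝ (Fin n)) (c : ℝ) :
    aInner A x ξ (c • η) = c * aInner A x ξ η := by
  simp only [aInner, Finset.mul_sum, PiLp.smul_apply, smul_eq_mul]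
  exact Finset.sum_congr rfl fun i _ => Finset.sum_congr rfl fun j _ => by ring

lemma continuous_aInner_right {n : ℕ} (A : EuclideanSpace ℝ (Fin n) → Matrix (Fin n) (Fin n) ℝ)
    (x ξ : EuclideanSpace ℝ (Fin n)) : Continuous (fun η => aInner A x ξ η) := by
  unfold aInner
  fun_prop

lemma IsEllipticMatrix.aInner_self_nonneg {n : ℕ} {Ω : Set (EuclideanSpace ℝ (Fin n))}
    {A : EuclideanSpace ℝ (Fin n) → Matrix (Fin n) (Fin n) ℝ}
    (hA : IsEllipticMatrix Ω A) {x : EuclideanSpace ℝ (Fin n)} (hx : x ∈ Ω)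
    (ξ : EuclideanSpace ℝ (Fin n)) : 0 ≤ aInner A x ξ ξ := by
  by_cases h : ξ = 0
  · simp [aInner, h]
  · exact (hA.posdef x hx ξ h).le

/-- Pairing the flux `|ξ|_A^{p-2} A ξ` with `ξ` itself gives `|ξ|_A^p`, also when `ξ = 0` and
`p < 2`, where `0 ^ (p - 2)` has a junk value. -/
lemma IsEllipticMatrix.flux_self {n : ℕ} {Ω : Set (EuclideanSpace ℝ (Fin n))}
    {A : EuclideanSpace ℝ (Fin n) → Matrix (Fin n) (Fin n) ℝ}
    (hA : IsEllipticMatrix Ω A) {p : ℝ} (hp : 1 < p) {x : EuclideanSpace ℝ (Fin n)} (hx : x ∈ Ω)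
    (ξ : EuclideanSpace ℝ (Fin n)) :
    aNorm A x ξ ^ (p - 2) * aInner A x ξ ξ = aNorm A x ξ ^ p := by
  have h : aInner A x ξ ξ = aNorm A x ξ ^ (2 : ℕ) :=
    (Real.sq_sqrt (hA.aInner_self_nonneg hx ξ)).symm
  rcases (aNorm_nonneg A x ξ).eq_or_lt with h0 | h0
  · rw [h, ← h0, Real.zero_rpow (by linarith : p ≠ 0)]
    simp
  · rw [h, ← Real.rpow_natCast, ← Real.rpow_add h0]
    norm_num

/-- On compact subsets of `Ω` the flux `|∇G|_A^{p-2} A ∇G` is bounded. For `p < 2` this uses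
ellipticity, which controls `‖∇G‖` by `|∇G|_A`. -/
lemma IsEllipticMatrix.flux_bound {n : ℕ} {Ω : Set (EuclideanSpace ℝ (Fin n))}
    (hΩ : IsOpen Ω) {A : EuclideanSpace ℝ (Fin n) → Matrix (Fin n) (Fin n) ℝ}
    (hA : IsEllipticMatrix Ω A) {p : ℝ} (hp : 1 < p)
    {X : EuclideanSpace ℝ (Fin n) → EuclideanSpace ℝ (Fin n)} (hX : ContinuousOn X Ω)
    {K : Set (EuclideanSpace ℝ (Fin n))} (hK : IsCompact K) (hKΩ : K ⊆ Ω) :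
    ∃ B, 0 ≤ B ∧ ∀ x ∈ K, ∀ η : EuclideanSpace ℝ (Fin n),
      |aNorm A x (X x) ^ (p - 2) * aInner A x (X x) η| ≤ B * ‖η‖ := by
  obtain ⟨Θ, hΘ, hell⟩ := hA.elliptic K hKΩ hK
  have hent : ∀ i j, ∃ M, ∀ x ∈ K, ‖A x i j‖ ≤ M := fun i j =>
    hK.exists_bound_of_continuousOn ((hA.continuousOn_entry hΩ i j).mono hKΩ)
  choose M hM using hent
  obtain ⟨N, hN⟩ := hK.exists_bound_of_continuousOn
    ((continuousOn_aInner hΩ hA hX hX).sqrt.mono hKΩ)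
  set S := ∑ i, ∑ j, |M i j| with hS
  have hS0 : 0 ≤ S := Finset.sum_nonneg fun i _ => Finset.sum_nonneg fun j _ => abs_nonneg _
  refine ⟨S * √Θ * |N| ^ (p - 1), by positivity, fun x hx η => ?_⟩
  have hNx : aNorm A x (X x) ≤ |N| := (le_abs_self _).trans ((hN x hx).trans (le_abs_self _))
  have h1 : |aInner A x (X x) η| ≤ S * (‖X x‖ * ‖η‖) := by
    rw [hS, Finset.sum_mul]
    refine (Finset.abs_sum_le_sum_abs _ _).trans (Finset.sum_le_sum fun i _ => ?_)
    rw [Finset.sum_mul]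
    refine (Finset.abs_sum_le_sum_abs _ _).trans (Finset.sum_le_sum fun j _ => ?_)
    rw [abs_mul, abs_mul, mul_assoc]
    have e1 : |A x i j| ≤ |M i j| := (hM i j x hx).trans (le_abs_self _)
    have e2 : |X x j| ≤ ‖X x‖ := PiLp.norm_apply_le (X x) j
    have e3 : |η i| ≤ ‖η‖ := PiLp.norm_apply_le η i
    gcongr
  have h2 : ‖X x‖ ≤ √Θ * aNorm A x (X x) := by
    rw [aNorm, ← Real.sqrt_mul hΘ.le]
    refine Real.le_sqrt_of_sq_le ?_
    have := (hell x hx (X x)).1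
    rwa [inv_mul_le_iff₀ hΘ] at this
  have h0 := aNorm_nonneg A x (X x)
  have h3 : aNorm A x (X x) ^ (p - 2) * aNorm A x (X x) ≤ |N| ^ (p - 1) := by
    rcases h0.eq_or_lt with h | h
    · rw [← h, mul_zero]; positivity
    · rw [← Real.rpow_add_one h.ne']
      have : p - 2 + 1 = p - 1 := by ring
      rw [this]
      exact Real.rpow_le_rpow h0 hNx (by linarith)
  rw [abs_mul, abs_of_nonneg (Real.rpow_nonneg h0 _)]
  calc aNorm A x (X x) ^ (p - 2) * |aInner A x (X x) η|
      ≤ aNorm A x (X x) ^ (p - 2) * (S * ((√Θ * aNorm A x (X x)) * ‖η‖)) := by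
        gcongr
        exact h1.trans (by gcongr)
    _ = S * √Θ * (aNorm A x (X x) ^ (p - 2) * aNorm A x (X x)) * ‖η‖ := by ring
    _ ≤ _ := by gcongr

lemma aestronglyMeasurable_flux {n : ℕ} {Ω : Set (EuclideanSpace ℝ (Fin n))}
    (hΩ : IsOpen Ω) {A : EuclideanSpace ℝ (Fin n) → Matrix (Fin n) (Fin n) ℝ}
    (hA : IsEllipticMatrix Ω A) (p : ℝ)
    {X Y : EuclideanSpace ℝ (Fin n) → EuclideanSpace ℝ (Fin n)}
    (hX : ContinuousOn X Ω) (hY : ContinuousOn Y Ω) :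
    AEStronglyMeasurable (fun x => aNorm A x (X x) ^ (p - 2) * aInner A x (X x) (Y x))
      (volume.restrict Ω) := by
  have h1 := (continuousOn_aInner hΩ hA hX hX).sqrt.aemeasurable (μ := volume) hΩ.measurableSet
  have h2 := (continuousOn_aInner hΩ hA hX hY).aemeasurable (μ := volume) hΩ.measurableSet
  exact ((h1.pow_const (p - 2)).mul h2).aestronglyMeasurable

/-! ### Testing with `C¹` functions -/

/-- By mollification, the weak formulation extends to compactly supported `C¹` test functions. -/
lemma weak_formulation_C1 {n : ℕ} {Ω : Set (EuclideanSpace ℝ (Fin n))}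
    (hΩ : IsOpen Ω) {A : EuclideanSpace ℝ (Fin n) → Matrix (Fin n) (Fin n) ℝ}
    (hA : IsEllipticMatrix Ω A) {p : ℝ} (hp : 1 < p)
    {U g G : EuclideanSpace ℝ (Fin n) → ℝ} (hG : ContDiffOn ℝ 1 G Ω)
    (hsol : IsWeakSolution A p U g Ω G)
    (hU : IntegrableOn (fun x => U x * G x ^ (p - 1)) Ω) (hg : IntegrableOn g Ω)
    {ψ : EuclideanSpace ℝ (Fin n) → ℝ} (hψ : ContDiff ℝ 1 ψ) (hc : HasCompactSupport ψ)
    (hs : tsupport ψ ⊆ Ω) :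
    (∫ x in Ω, aNorm A x (gradient G x) ^ (p - 2) * aInner A x (gradient G x) (gradient ψ x))
      + (∫ x in Ω, U x * G x ^ (p - 1) * ψ x) = ∫ x in Ω, g x * ψ x := by
  obtain ⟨δ, hδ, hδΩ⟩ := hc.isCompact.exists_cthickening_subset_open hΩ hs
  set K := Metric.cthickening δ (tsupport ψ) with hKdef
  have hK : IsCompact K := hc.isCompact.cthickening
  have hgψ := continuousOn_gradient hΩ hψ.contDiffOn
  have hgψ' : Continuous (gradient ψ) := by
    simpa using continuousOn_gradient isOpen_univ hψ.contDiffOn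
  obtain ⟨B, hB0, hB⟩ := hA.flux_bound hΩ hp (continuousOn_gradient hΩ hG) hK hδΩ
  obtain ⟨M₀, hM₀⟩ := hK.exists_bound_of_continuousOn hψ.continuous.continuousOn
  obtain ⟨M₁, hM₁⟩ := hK.exists_bound_of_continuousOn hgψ'.continuousOn
  let e : ℕ → ℝ := fun k => min δ (1 / ((k : ℝ) + 1))
  have he0 : ∀ k, 0 < e k := fun k => lt_min hδ (by positivity)
  have he1 : ∀ k, e k ≤ 1 := fun k => (min_le_right _ _).trans
    ((div_le_one (by positivity)).2 (by linarith [(Nat.cast_nonneg k : (0:ℝ) ≤ k)]))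
  have helim : Tendsto e atTop (𝓝 0) :=
    squeeze_zero (fun k => (he0 k).le) (fun k => min_le_right _ _)
      tendsto_one_div_add_atTop_nhds_zero_nat
  choose χ hχs hχK hχ hχg using fun k => exists_smooth_approx hψ hc (he0 k)
  have hχK' : ∀ k, tsupport (χ k) ⊆ K := fun k =>
    closure_minimal ((hχK k).trans (Metric.cthickening_mono (min_le_left _ _) _)) hK.isClosed
  have hout : ∀ k x, x ∉ K → χ k x = 0 := fun k x hx =>
    image_eq_zero_of_notMem_tsupport fun h => hx (hχK' k h)
  have houtg : ∀ k x, x ∉ K → gradient (χ k) x = 0 := fun k x hx => by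
    have : fderiv ℝ (χ k) x = 0 := fderiv_of_notMem_tsupport ℝ fun h => hx (hχK' k h)
    simp [gradient, this]
  have hχC1 : ∀ k, ContDiff ℝ 1 (χ k) := fun k => (hχs k).of_le (by exact_mod_cast le_top)
  have hlim0 : ∀ x, Tendsto (fun k => χ k x) atTop (𝓝 (ψ x)) := fun x =>
    tendsto_iff_dist_tendsto_zero.2 (squeeze_zero (fun _ => dist_nonneg)
      (fun k => by rw [Real.dist_eq]; exact hχ k x) helim)
  have hlim1 : ∀ x, Tendsto (fun k => gradient (χ k) x) atTop (𝓝 (gradient ψ x)) := fun x =>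
    tendsto_iff_dist_tendsto_zero.2 (squeeze_zero (fun _ => dist_nonneg)
      (fun k => by rw [dist_eq_norm]; exact hχg k x) helim)
  have hbd0 : ∀ k x, |χ k x| ≤ |M₀| + 1 := fun k x => by
    by_cases hx : x ∈ K
    · have h1 := hχ k x
      have h2 : |ψ x| ≤ |M₀| := (hM₀ x hx).trans (le_abs_self _)
      have h3 : |χ k x| ≤ |χ k x - ψ x| + |ψ x| := by
        simpa using abs_add_le (χ k x - ψ x) (ψ x)
      linarith [he1 k]
    · rw [hout k x hx, abs_zero]; positivity
  have hbd1 : ∀ k, ∀ x ∈ K, ‖gradient (χ k) x‖ ≤ |M₁| + 1 := fun k x hx => by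
    have h1 := hχg k x
    have h2 : ‖gradient ψ x‖ ≤ |M₁| := (hM₁ x hx).trans (le_abs_self _)
    have h3 : ‖gradient (χ k) x‖ ≤ ‖gradient (χ k) x - gradient ψ x‖ + ‖gradient ψ x‖ := by
      simpa using norm_add_le (gradient (χ k) x - gradient ψ x) (gradient ψ x)
    linarith [he1 k]
  have hweight : ∀ f : EuclideanSpace ℝ (Fin n) → ℝ, IntegrableOn f Ω →
      Tendsto (fun k => ∫ x in Ω, f x * χ k x) atTop (𝓝 (∫ x in Ω, f x * ψ x)) := by
    intro f hf
    refine tendsto_integral_of_dominated_convergence (fun x => |f x| * (|M₀| + 1)) ?_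
      (hf.abs.mul_const _) ?_ ?_
    · exact fun k => hf.aestronglyMeasurable.mul (hχs k).continuous.aestronglyMeasurable
    · refine fun k => Eventually.of_forall fun x => ?_
      rw [Real.norm_eq_abs, abs_mul]
      exact mul_le_mul_of_nonneg_left (hbd0 k x) (abs_nonneg _)
    · exact Eventually.of_forall fun x => (hlim0 x).const_mul _
  have hflux : Tendsto (fun k => ∫ x in Ω, aNorm A x (gradient G x) ^ (p - 2) *
      aInner A x (gradient G x) (gradient (χ k) x)) atTop (𝓝 (∫ x in Ω,
      aNorm A x (gradient G x) ^ (p - 2) * aInner A x (gradient G x) (gradient ψ x))) := by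
    refine tendsto_integral_of_dominated_convergence
      (K.indicator fun _ => B * (|M₁| + 1)) ?_ ?_ ?_ ?_
    · exact fun k => aestronglyMeasurable_flux hΩ hA p (continuousOn_gradient hΩ hG)
        (continuousOn_gradient hΩ (hχC1 k).contDiffOn)
    · refine Integrable.integrableOn ?_
      exact (integrable_indicator_iff hK.measurableSet).2
        (integrableOn_const hK.measure_lt_top.ne)
    · refine fun k => Eventually.of_forall fun x => ?_
      by_cases hx : x ∈ K
      · rw [indicator_of_mem hx, Real.norm_eq_abs]
        exact (hB x hx _).trans (mul_le_mul_of_nonneg_left (hbd1 k x hx) hB0)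
      · rw [indicator_of_notMem hx, houtg k x hx]
        simp [aInner]
    · refine Eventually.of_forall fun x => Tendsto.const_mul _ ?_
      exact ((continuous_aInner_right A x _).tendsto _).comp (hlim1 x)
  refine tendsto_nhds_unique ((hflux.add (hweight _ hU)).congr fun k => ?_) (hweight _ hg)
  exact hsol (χ k) ⟨hχs k, hK.of_isClosed_subset (isClosed_tsupport _) (hχK' k),
    (hχK' k).trans hδΩ⟩

/-! ### Level-set cut-offs -/

/-- The smooth cut-off profile `h`, equal to `0` on `t ≤ 1` and to `1` on `t ≥ 2`. -/
noncomputable def cutoffProfile (t : ℝ) : ℝ := Real.smoothTransition (t - 1)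

lemma cutoffProfile_contDiff : ContDiff ℝ 1 cutoffProfile :=
  (Real.smoothTransition.contDiff (n := 1)).comp (contDiff_id.sub contDiff_const)

lemma cutoffProfile_of_le {t : ℝ} (ht : t ≤ 1) : cutoffProfile t = 0 :=
  Real.smoothTransition.zero_of_nonpos (by linarith)

lemma cutoffProfile_of_ge {t : ℝ} (ht : 2 ≤ t) : cutoffProfile t = 1 :=
  Real.smoothTransition.one_of_one_le (by linarith)

lemma abs_cutoffProfile_le (t : ℝ) : |cutoffProfile t| ≤ 1 := by
  rw [cutoffProfile, abs_of_nonneg (Real.smoothTransition.nonneg _)]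
  exact Real.smoothTransition.le_one _

lemma deriv_cutoffProfile_of_gt {t : ℝ} (ht : 2 < t) : deriv cutoffProfile t = 0 := by
  have : cutoffProfile =ᶠ[𝓝 t] fun _ => 1 := by
    filter_upwards [lt_mem_nhds ht] with s hs using cutoffProfile_of_ge hs.le
  rw [this.deriv_eq, deriv_const]

/-- The derivative of the profile is `O(1/t)`, since it is bounded and vanishes for `t > 2`. -/
lemma exists_deriv_cutoffProfile_bound :
    ∃ C, ∀ t, 0 ≤ t → |deriv cutoffProfile t| * t ≤ C := by
  have hcont : Continuous (fun t => |deriv cutoffProfile t| * t) :=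
    (cutoffProfile_contDiff.continuous_deriv le_rfl).abs.mul continuous_id
  obtain ⟨C, hC⟩ := (isCompact_Icc (a := (0:ℝ)) (b := 2)).exists_bound_of_continuousOn
    hcont.continuousOn
  refine ⟨|C|, fun t ht => ?_⟩
  rcases le_or_gt t 2 with h | h
  · exact (le_abs_self _).trans ((hC t ⟨ht, h⟩).trans (le_abs_self _))
  · rw [deriv_cutoffProfile_of_gt h]; simp

/-- The heart of the matter: if `|∇G|_A^p / G` were integrable, testing the equation with
`h(G/ε)` and letting `ε → 0` would give `∫ U G^{p-1} = ∫ g`. -/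
lemma integral_potential_eq_of_integrable {n : ℕ} {Ω : Set (EuclideanSpace ℝ (Fin n))}
    (hΩ : IsOpen Ω) {A : EuclideanSpace ℝ (Fin n) → Matrix (Fin n) (Fin n) ℝ}
    (hA : IsEllipticMatrix Ω A) {p : ℝ} (hp : 1 < p)
    {U g G : EuclideanSpace ℝ (Fin n) → ℝ} (hG : ContDiffOn ℝ 1 G Ω)
    (hGpos : ∀ x ∈ Ω, 0 < G x) (hGinf : TendstoZeroAtInfinityIn Ω Ω G)
    (hsol : IsWeakSolution A p U g Ω G)
    (hU : IntegrableOn (fun x => U x * G x ^ (p - 1)) Ω) (hg : IntegrableOn g Ω)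
    (hGint : IntegrableOn (fun x => aNorm A x (gradient G x) ^ p / G x) Ω) :
    ∫ x in Ω, U x * G x ^ (p - 1) = ∫ x in Ω, g x := by
  obtain ⟨C, hC⟩ := exists_deriv_cutoffProfile_bound
  let N : ℕ → ℝ := fun k => (k : ℝ) + 1
  have hN0 : ∀ k, 0 < N k := fun k => by positivity
  have hNlim : Tendsto N atTop atTop := tendsto_natCast_atTop_atTop.atTop_add tendsto_const_nhds
  let ψ : ℕ → EuclideanSpace ℝ (Fin n) → ℝ := fun k =>
    Ω.indicator fun x => cutoffProfile (N k * G x)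
  have hψΩ : ∀ k, ∀ x ∈ Ω, ψ k x = cutoffProfile (N k * G x) := fun k x hx =>
    indicator_of_mem hx _
  have hψsupp : ∀ k, ∃ K ⊆ Ω, IsCompact K ∧ ∀ x, x ∉ K → ψ k x = 0 := by
    intro k
    obtain ⟨K, hKΩ, hK, h⟩ := hGinf (N k)⁻¹ (inv_pos.2 (hN0 k))
    refine ⟨K, hKΩ, hK, fun x hx => ?_⟩
    by_cases hxΩ : x ∈ Ω
    · rw [hψΩ k x hxΩ]
      refine cutoffProfile_of_le ?_
      have := mul_lt_mul_of_pos_left (h x ⟨hxΩ, hx⟩) (hN0 k)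
      rw [mul_inv_cancel₀ (hN0 k).ne'] at this
      exact this.le
    · exact indicator_of_notMem hxΩ _
  have hGat : ∀ x ∈ Ω, ContDiffAt ℝ 1 G x := fun x hx => hG.contDiffAt (hΩ.mem_nhds hx)
  have hψC1 : ∀ k, ContDiff ℝ 1 (ψ k) := by
    intro k
    obtain ⟨K, hKΩ, hK, h⟩ := hψsupp k
    refine contDiff_iff_contDiffAt.2 fun x => ?_
    by_cases hxΩ : x ∈ Ω
    · have h1 : ContDiffAt ℝ 1 (fun x => cutoffProfile (N k * G x)) x :=
        cutoffProfile_contDiff.contDiffAt.comp x (contDiffAt_const.mul (hGat x hxΩ))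
      refine h1.congr_of_eventuallyEq ?_
      filter_upwards [hΩ.mem_nhds hxΩ] with y hy using hψΩ k y hy
    · have hxK : x ∉ K := fun hx => hxΩ (hKΩ hx)
      refine (contDiffAt_const (c := (0:ℝ))).congr_of_eventuallyEq ?_
      filter_upwards [hK.isClosed.isOpen_compl.mem_nhds hxK] with y hy using h y hy
  have hgrad : ∀ k, ∀ x ∈ Ω, gradient (ψ k) x =
      (deriv cutoffProfile (N k * G x) * N k) • gradient G x := by
    intro k x hx
    have h1 : HasDerivAt cutoffProfile (deriv cutoffProfile (N k * G x)) (N k * G x) :=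
      (cutoffProfile_contDiff.differentiable one_ne_zero _).hasDerivAt
    have h2 : HasFDerivAt (fun y => N k * G y) (N k • fderiv ℝ G x) x :=
      ((hGat x hx).differentiableAt one_ne_zero).hasFDerivAt.const_mul (N k)
    have h3 := h1.comp_hasFDerivAt x h2
    have h4 : ψ k =ᶠ[𝓝 x] cutoffProfile ∘ fun y => N k * G y := by
      filter_upwards [hΩ.mem_nhds hx] with y hy using hψΩ k y hy
    simp only [gradient]
    rw [h4.fderiv_eq, h3.fderiv, smul_smul, map_smul]
  have hweak : ∀ k, (∫ x in Ω, aNorm A x (gradient G x) ^ (p - 2) *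
        aInner A x (gradient G x) (gradient (ψ k) x))
      + (∫ x in Ω, U x * G x ^ (p - 1) * ψ k x) = ∫ x in Ω, g x * ψ k x := by
    intro k
    obtain ⟨K, hKΩ, hK, h⟩ := hψsupp k
    have hsub : tsupport (ψ k) ⊆ K :=
      closure_minimal (fun x hx => by_contra fun hxK => hx (h x hxK)) hK.isClosed
    exact weak_formulation_C1 hΩ hA hp hG hsol hU hg (hψC1 k)
      (hK.of_isClosed_subset (isClosed_tsupport _) hsub) (hsub.trans hKΩ)
  have hev : ∀ x ∈ Ω, ∀ᶠ k in atTop, 2 < N k * G x := fun x hx =>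
    (hNlim.atTop_mul_const (hGpos x hx)).eventually_gt_atTop 2
  have hweight : ∀ f : EuclideanSpace ℝ (Fin n) → ℝ, IntegrableOn f Ω →
      Tendsto (fun k => ∫ x in Ω, f x * ψ k x) atTop (𝓝 (∫ x in Ω, f x)) := by
    intro f hf
    refine tendsto_integral_of_dominated_convergence (fun x => |f x|) ?_ hf.abs ?_ ?_
    · exact fun k => hf.aestronglyMeasurable.mul (hψC1 k).continuous.aestronglyMeasurable
    · refine fun k => (ae_restrict_iff' hΩ.measurableSet).2 (Eventually.of_forall fun x hx => ?_)
      rw [Real.norm_eq_abs, abs_mul, hψΩ k x hx]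
      exact mul_le_of_le_one_right (abs_nonneg _) (abs_cutoffProfile_le _)
    · refine (ae_restrict_iff' hΩ.measurableSet).2 (Eventually.of_forall fun x hx => ?_)
      refine tendsto_const_nhds.congr' ?_
      filter_upwards [hev x hx] with k hk
      rw [hψΩ k x hx, cutoffProfile_of_ge hk.le, mul_one]
  have hfluxeq : ∀ k, ∀ x ∈ Ω, aNorm A x (gradient G x) ^ (p - 2) *
      aInner A x (gradient G x) (gradient (ψ k) x) =
      deriv cutoffProfile (N k * G x) * N k * aNorm A x (gradient G x) ^ p := by
    intro k x hx
    rw [hgrad k x hx, aInner_smul_right, ← hA.flux_self hp hx]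
    ring
  have hflux : Tendsto (fun k => ∫ x in Ω, aNorm A x (gradient G x) ^ (p - 2) *
      aInner A x (gradient G x) (gradient (ψ k) x)) atTop (𝓝 0) := by
    have h0 : (0:ℝ) = ∫ x in Ω, (fun _ => (0:ℝ)) x := by simp
    rw [h0]
    refine tendsto_integral_of_dominated_convergence
      (fun x => C * (aNorm A x (gradient G x) ^ p / G x)) ?_ (hGint.const_mul C) ?_ ?_
    · exact fun k => aestronglyMeasurable_flux hΩ hA p (continuousOn_gradient hΩ hG)
        (continuousOn_gradient hΩ (hψC1 k).contDiffOn)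
    · refine fun k => (ae_restrict_iff' hΩ.measurableSet).2 (Eventually.of_forall fun x hx => ?_)
      have hGx := hGpos x hx
      have hNx := hN0 k
      have ha : 0 ≤ aNorm A x (gradient G x) ^ p := Real.rpow_nonneg (aNorm_nonneg _ _ _) _
      have hb := hC (N k * G x) (by positivity)
      rw [hfluxeq k x hx, Real.norm_eq_abs, abs_mul, abs_mul, abs_of_pos hNx, abs_of_nonneg ha,
        ← mul_div_assoc, le_div_iff₀ hGx]
      calc |deriv cutoffProfile (N k * G x)| * N k * aNorm A x (gradient G x) ^ p * G x
          = |deriv cutoffProfile (N k * G x)| * (N k * G x) * aNorm A x (gradient G x) ^ p := by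
            ring
        _ ≤ _ := by gcongr
    · refine (ae_restrict_iff' hΩ.measurableSet).2 (Eventually.of_forall fun x hx => ?_)
      refine tendsto_const_nhds.congr' ?_
      filter_upwards [hev x hx] with k hk
      rw [hfluxeq k x hx, deriv_cutoffProfile_of_gt hk]
      simp
  have := tendsto_nhds_unique ((hflux.add (hweight _ hU)).congr hweak) (hweight _ hg)
  simpa using this

theorem null_criticality_with_potential
    {n : ℕ} (hn : 2 ≤ n) (Ω : Set (EuclideanSpace ℝ (Fin n)))
    (hΩopen : IsOpen Ω) (hΩconn : IsConnected Ω)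
    (p : ℝ) (hp : 1 < p)
    (A : EuclideanSpace ℝ (Fin n) → Matrix (Fin n) (Fin n) ℝ)
    (hA : IsEllipticMatrix Ω A)
    (V : EuclideanSpace ℝ (Fin n) → ℝ) (hV : InMorreyLoc p Ω V)
    (hsub : IsSubcritical A p (fun x => (p / (p - 1)) ^ (p - 1) * V x) Ω)
    (φ : EuclideanSpace ℝ (Fin n) → ℝ) (hφ : IsTestFun Ω φ) (hφnonneg : ∀ x, 0 ≤ φ x)
    (hφne : ∃ x, φ x ≠ 0)
    (G : EuclideanSpace ℝ (Fin n) → ℝ) (α : ℝ) (hα : α ∈ Set.Ioc (0:ℝ) 1)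
    (hG1 : IsC1Holder α Ω G) (hGpos : ∀ x ∈ Ω, 0 < G x)
    (hGsol : IsWeakSolution A p (fun x => (p / (p - 1)) ^ (p - 1) * V x) φ Ω G)
    (hGinf : TendstoZeroAtInfinityIn Ω Ω G)
    (hVG : (∫ x in Ω, V x * G x ^ (p - 1)) < 0)
    (hVGfin : (∫⁻ x in Ω, ENNReal.ofReal (|V x| * G x ^ (p - 1))) < ⊤) :
    (∫⁻ x in Ω, ENNReal.ofReal
        ((((p - 1) / p) ^ p * (aNorm A x (gradient G x) / G x) ^ p +
          ((p - 1) / p) ^ (p - 1) * φ x * G x ^ (1 - p)) * (G x ^ ((p - 1) / p)) ^ p) = ⊤) ∧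
    (∫⁻ x in Ω, ENNReal.ofReal
        ((((p - 1) / p) ^ p * (aNorm A x (gradient G x) / G x) ^ p +
          ((p - 1) / p) ^ (p - 1) * φ x * G x ^ (1 - p)) * G x ^ (p - 1)) = ⊤) := by
  have hp0 : 0 < p := by linarith
  have hp1 : 0 < p - 1 := by linarith
  have key : (∫⁻ x in Ω, ENNReal.ofReal
        ((((p - 1) / p) ^ p * (aNorm A x (gradient G x) / G x) ^ p +
          ((p - 1) / p) ^ (p - 1) * φ x * G x ^ (1 - p)) * G x ^ (p - 1)) = ⊤) := by
    by_contra hne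
    set c := ((p - 1) / p) ^ p with hc
    have hc0 : 0 < c := by positivity
    have hle : ∀ x ∈ Ω, c * (aNorm A x (gradient G x) ^ p / G x) ≤
        (c * (aNorm A x (gradient G x) / G x) ^ p +
          ((p - 1) / p) ^ (p - 1) * φ x * G x ^ (1 - p)) * G x ^ (p - 1) := by
      intro x hx
      have hGx := hGpos x hx
      have h1 : (aNorm A x (gradient G x) / G x) ^ p * G x ^ (p - 1)
          = aNorm A x (gradient G x) ^ p / G x := by
        rw [Real.div_rpow (aNorm_nonneg _ _ _) hGx.le, Real.rpow_sub_one hGx.ne']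
        field_simp
      have h2 : 0 ≤ ((p - 1) / p) ^ (p - 1) * φ x * G x ^ (1 - p) * G x ^ (p - 1) := by
        have := hφnonneg x
        positivity
      rw [add_mul, mul_assoc c, h1]
      linarith
    have hGint : IntegrableOn (fun x => c * (aNorm A x (gradient G x) ^ p / G x)) Ω := by
      refine ⟨?_, ?_⟩
      · have hgr := continuousOn_gradient hΩopen hG1.1
        have h1 := (continuousOn_aInner hΩopen hA hgr hgr).sqrt.rpow_const
          (p := p) fun x _ => Or.inr hp0.le
        exact (continuousOn_const.mul (h1.div hG1.1.continuousOn
          fun x hx => (hGpos x hx).ne')).aestronglyMeasurable hΩopen.measurableSet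
      · rw [hasFiniteIntegral_iff_ofReal]
        · refine lt_of_le_of_lt (setLIntegral_mono' hΩopen.measurableSet fun x hx => ?_)
            (lt_top_iff_ne_top.2 hne)
          exact ENNReal.ofReal_le_ofReal (hle x hx)
        · refine (ae_restrict_iff' hΩopen.measurableSet).2 (Eventually.of_forall fun x hx => ?_)
          have hGx := hGpos x hx
          have := aNorm_nonneg A x (gradient G x)
          simp only [Pi.zero_apply]
          positivity
    have hGint' : IntegrableOn (fun x => aNorm A x (gradient G x) ^ p / G x) Ω := by
      refine (hGint.const_mul c⁻¹).congr (Eventually.of_forall fun x => ?_)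
      simp only []
      rw [inv_mul_cancel_left₀ (ne_of_gt hc0)]
    -- A nonzero Bochner integral certifies integrability.
    have hVint : IntegrableOn (fun x => V x * G x ^ (p - 1)) Ω := by
      by_contra h
      rw [integral_undef h] at hVG
      exact lt_irrefl _ hVG
    have hUint : IntegrableOn (fun x => (p / (p - 1)) ^ (p - 1) * V x * G x ^ (p - 1)) Ω := by
      simpa only [IntegrableOn, mul_assoc] using hVint.const_mul ((p / (p - 1)) ^ (p - 1))
    have hφint : IntegrableOn φ Ω :=
      (hφ.1.continuous.integrable_of_hasCompactSupport hφ.2.1).integrableOn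
    have heq := integral_potential_eq_of_integrable hΩopen hA hp hG1.1 hGpos hGinf hGsol
      hUint hφint hGint'
    have hneg : (∫ x in Ω, (p / (p - 1)) ^ (p - 1) * V x * G x ^ (p - 1)) < 0 := by
      simp only [mul_assoc]
      rw [integral_const_mul]
      exact mul_neg_of_pos_of_neg (by positivity) hVG
    have hnonneg : 0 ≤ ∫ x in Ω, φ x := integral_nonneg hφnonneg
    linarith
  refine ⟨?_, key⟩
  rw [← key]
  refine setLIntegral_congr_fun hΩopen.measurableSet fun x hx => ?_
  have : (G x ^ ((p - 1) / p)) ^ p = G x ^ (p - 1) := by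
    rw [← Real.rpow_mul (hGpos x hx).le, div_mul_cancel₀ _ hp0.ne']
  simp only [this]
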